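/- Matrix Gronwall lemma: Let L_t(X) = L(X) + c(t)X, where L(X) = AX + XAᵀ + Σ_{i,j=1}^d k_{ij}N_iXN_jᵀ with K = (k_{ij}) positive semidefinite, and c : [0,T] → [0,∞) is left-continuous and integrable. Suppose X, X̄ : [0,T] → Sym(n,ℝ) are continuous, X(0) = X̄(0), X̄ satisfies X̄(t) = X̄(0) + ∫₀ᵗ L_v(X̄(v)) dv, and X satisfies X(t) − X(s) ≤ ∫ₛᵗ L_v(X(v)) dv for all 0 ≤ s ≤ t ≤ T (Loewner order). Then X(t) ≤ X̄(t) for all t ∈ [0,T]. -/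

import Mathlib

open Matrix

/-- Lyapunov operator `L(X) = A X + X Aᵀ + ∑ᵢⱼ kᵢⱼ Nᵢ X Nⱼᵀ`. -/
def lyap {n d : ℕ} (A : Matrix (Fin n) (Fin n) ℝ)
    (N : Fin d → Matrix (Fin n) (Fin n) ℝ) (K : Matrix (Fin d) (Fin d) ℝ)
    (X : Matrix (Fin n) (Fin n) ℝ) : Matrix (Fin n) (Fin n) ℝ :=
  A * X + X * Aᵀ + ∑ i : Fin d, ∑ j : Fin d, K i j • (N i * X * (N j)ᵀ)

/-!
The difference `Y = X̄ - X` is a supersolution of `Y' = L Y + c Y`, and positivity of `Y 0` has to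
be propagated. Adding `ε h I` with `h t = exp (∫ (M + c))` and `M` large turns `Y` into a strict
supersolution `P` that is positive definite at time `0`. At the first time `t` at which
`xᵀ P(t) x = 0` for some unit vector `x`, resolvent positivity gives `xᵀ L(P(t)) x ≥ 0`, so the
nonnegative function `p = xᵀ P x` satisfies `p' ≥ ℓ + c p` with a continuous `ℓ` that is positive
at `t`. Since `p` vanishes at `t`, a Gronwall estimate backwards from `t` makes it negative just
before `t`, a contradiction; hence `P > 0` throughout, and `ε → 0` gives the claim.

Resolvent positivity of the Lyapunov operator is used in the form: if `P ≥ 0` and `xᵀ P x = 0`, then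
`P x = 0`, so the terms with `A` drop out, and the remaining sum is nonnegative by the Schur
product theorem.
-/

section

open MeasureTheory Set Filter Topology

/-! ### Scalar integral inequalities -/

theorem absolutelyContinuousOnInterval_comp_of_locallyLipschitz {F Y : Type*}
    [SeminormedAddCommGroup F] [PseudoMetricSpace Y] {f : F → Y} {g : ℝ → F} {a b : ℝ}
    (hf : LocallyLipschitz f) (hg : AbsolutelyContinuousOnInterval g a b) :
    AbsolutelyContinuousOnInterval (f ∘ g) a b := by
  obtain ⟨K, hK⟩ := (hf.locallyLipschitzOn (s := g '' uIcc a b)).exists_lipschitzOnWith_of_compact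
    (isCompact_uIcc.image_of_continuousOn hg.continuousOn)
  refine squeeze_zero' (.of_forall fun E ↦ Finset.sum_nonneg fun i _ ↦ dist_nonneg) ?_
    (by simpa using Tendsto.const_mul (K : ℝ) hg)
  filter_upwards [mem_inf_of_right (mem_principal_self _)] with E hE
  rw [Finset.mul_sum]
  exact Finset.sum_le_sum fun i hi ↦ hK.dist_le_mul _ (mem_image_of_mem g (hE.1 i hi).1)
    _ (mem_image_of_mem g (hE.1 i hi).2)

theorem integral_mul_exp_integral {α : ℝ → ℝ} {a b s t : ℝ}
    (hα : IntervalIntegrable α volume a b) (hs : s ∈ uIcc a b) (ht : t ∈ uIcc a b) :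
    ∫ v in s..t, α v * Real.exp (∫ r in a..v, α r) =
      Real.exp (∫ r in a..t, α r) - Real.exp (∫ r in a..s, α r) := by
  have hsub : uIcc s t ⊆ uIcc a b := uIcc_subset_uIcc hs ht
  have hac : AbsolutelyContinuousOnInterval (fun v ↦ Real.exp (∫ r in a..v, α r)) s t :=
    absolutelyContinuousOnInterval_comp_of_locallyLipschitz (f := Real.exp)
      (Real.contDiff_exp (n := 1)).locallyLipschitz
      ((hα.absolutelyContinuousOnInterval_intervalIntegral left_mem_uIcc).mono hsub)
  rw [← hac.integral_deriv_eq_sub]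
  refine intervalIntegral.integral_congr_ae ?_
  filter_upwards [hα.ae_hasDerivAt_integral] with v hv hvst
  have hderiv := (hv (hsub (uIoc_subset_uIcc hvst)) a left_mem_uIcc).exp
  rw [hderiv.deriv, mul_comm]

theorem eventually_integral_abs_lt {c : ℝ → ℝ} {a t δ : ℝ} (hat : a < t) (hδ : 0 < δ)
    (hc : IntervalIntegrable c volume a t) : ∀ᶠ s in 𝓝[≤] t, ∫ v in s..t, |c v| < δ := by
  have hcont := intervalIntegral.continuousOn_primitive_interval' hc.abs right_mem_uIcc
  rw [uIcc_of_le hat.le] at hcont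
  have hlim := hcont t (right_mem_Icc.2 hat.le)
  rw [ContinuousWithinAt, nhdsWithin_Icc_eq_nhdsLE hat] at hlim
  filter_upwards [hlim.eventually_const_lt (u := -δ) (by simpa using hδ)] with s hs
  rw [intervalIntegral.integral_symm]
  linarith

theorem neg_integral_mul_le_of_abs_le {c p : ℝ → ℝ} {s t M : ℝ} (hst : s ≤ t)
    (hc : IntervalIntegrable c volume s t) (hpM : ∀ v ∈ Icc s t, |p v| ≤ M) :
    -∫ v in s..t, c v * p v ≤ (∫ v in s..t, |c v|) * M := by
  refine (neg_le_abs _).trans ?_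
  rw [← intervalIntegral.integral_mul_const, ← Real.norm_eq_abs]
  refine intervalIntegral.norm_integral_le_of_norm_le hst (.of_forall fun v hv ↦ ?_)
    (hc.abs.mul_const M)
  rw [norm_mul, Real.norm_eq_abs, Real.norm_eq_abs]
  exact mul_le_mul_of_nonneg_left (hpM v (Ioc_subset_Icc_self hv)) (abs_nonneg _)

/-- Gronwall's argument run backwards from `t`: if `p t = 0`, then near `t` the function `p` is at
most half of its own maximum. -/
theorem pos_of_integral_add_mul_le_sub {p ℓ c : ℝ → ℝ} {a t : ℝ} (hat : a < t)
    (hp : ContinuousOn p (Icc a t)) (hp0 : ∀ s ∈ Icc a t, 0 ≤ p s)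
    (hℓ : ContinuousOn ℓ (Icc a t)) (hℓt : 0 < ℓ t) (hc : IntervalIntegrable c volume a t)
    (h : ∀ s ∈ Icc a t, ∫ v in s..t, (ℓ v + c v * p v) ≤ p t - p s) : 0 < p t := by
  by_contra! hpt
  have hℓpos : ∀ᶠ s in 𝓝[≤] t, 0 < ℓ s := by
    rw [← nhdsWithin_Icc_eq_nhdsLE hat]
    exact (hℓ t (right_mem_Icc.2 hat.le)).eventually_const_lt hℓt
  obtain ⟨r, hrt, hnear⟩ := mem_nhdsLE_iff_exists_Icc_subset.1
    ((hℓpos.and (eventually_integral_abs_lt hat one_half_pos hc)).and (Icc_mem_nhdsLE hat))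
  have hr : r ∈ Icc r t := left_mem_Icc.2 hrt.le
  have hsub : Icc r t ⊆ Icc a t := fun s hs ↦ (hnear hs).2
  obtain ⟨m, hm, hmax⟩ := isCompact_Icc.exists_isMaxOn ⟨r, hr⟩ (hp.mono hsub)
  have hℓint : ∀ s ∈ Icc r t, IntervalIntegrable ℓ volume s t := fun s hs ↦
    (hℓ.mono ((Icc_subset_Icc_left hs.1).trans hsub)).intervalIntegrable_of_Icc hs.2
  have hhalf : ∀ s ∈ Icc r t, p s + ∫ v in s..t, ℓ v ≤ p m / 2 := fun s hs ↦ by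
    have hst : Icc s t ⊆ Icc r t := Icc_subset_Icc_left hs.1
    have hcs : IntervalIntegrable c volume s t :=
      hc.mono_set (uIcc_subset_uIcc_right (uIcc_of_le hat.le ▸ hsub hs))
    have hsuper := h s (hsub hs)
    rw [intervalIntegral.integral_add (hℓint s hs) (hcs.mul_continuousOn
      (by simpa only [uIcc_of_le hs.2] using hp.mono (hst.trans hsub)))] at hsuper
    have hcp : -∫ v in s..t, c v * p v ≤ (∫ v in s..t, |c v|) * p m :=
      neg_integral_mul_le_of_abs_le hs.2 hcs fun v hv ↦ by
        rw [abs_of_nonneg (hp0 v (hsub (hst hv)))]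
        exact hmax (hst hv)
    have hcm : (∫ v in s..t, |c v|) * p m ≤ 1 / 2 * p m :=
      mul_le_mul_of_nonneg_right (hnear hs).1.2.le (hp0 m (hsub hm))
    linarith
  have hℓm : 0 ≤ ∫ v in m..t, ℓ v := intervalIntegral.integral_nonneg hm.2 fun v hv ↦
    (hnear ⟨hm.1.trans hv.1, hv.2⟩).1.1.le
  have hℓr : 0 < ∫ v in r..t, ℓ v := intervalIntegral.intervalIntegral_pos_of_pos_on
    (hℓint r hr) (fun v hv ↦ (hnear (Ioo_subset_Icc_self hv)).1.1) hrt
  linarith [hhalf m hm, hhalf r hr, hp0 r (hsub hr)]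

theorem forall_pos_of_forall_nonneg_imp_pos {Ω : Type*} [TopologicalSpace Ω] [CompactSpace Ω]
    {F : ℝ → Ω → ℝ} {a b : ℝ} (hF : ContinuousOn (Function.uncurry F) (Icc a b ×ˢ univ))
    (ha : ∀ x, 0 < F a x)
    (hstep : ∀ t ∈ Ioc a b, (∀ s ∈ Icc a t, ∀ x, 0 ≤ F s x) → ∀ x, 0 < F t x) :
    ∀ t ∈ Icc a b, ∀ x, 0 < F t x := by
  intro t₀ ht₀ x₀
  by_contra! hneg
  have hK : IsCompact {p ∈ Icc a b ×ˢ (univ : Set Ω) | Function.uncurry F p ≤ 0} :=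
    (isCompact_Icc.prod isCompact_univ).of_isClosed_subset
      ((isClosed_Icc.prod isClosed_univ).isClosed_le hF continuousOn_const) (sep_subset _ _)
  obtain ⟨_, ⟨⟨t, x⟩, ⟨⟨ht : t ∈ Icc a b, -⟩, hFt : F t x ≤ 0⟩, rfl⟩, hmin⟩ :=
    (hK.image continuous_fst).exists_isLeast ⟨t₀, (t₀, x₀), ⟨⟨ht₀, trivial⟩, hneg⟩, rfl⟩
  have hbefore : ∀ s ∈ Ico a t, ∀ y, 0 < F s y := fun s hs y ↦ by
    by_contra! hFs
    exact hs.2.not_ge (hmin ⟨(s, y), ⟨⟨⟨hs.1, hs.2.le.trans ht.2⟩, trivial⟩, hFs⟩, rfl⟩)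
  have hat : a < t := ht.1.lt_of_ne fun hat ↦ hFt.not_gt (hat ▸ ha x)
  have huntil : ∀ s ∈ Icc a t, ∀ y, 0 ≤ F s y := fun s hs y ↦ by
    have hFy : ContinuousOn (fun s ↦ F s y) (closure (Ico a t)) := by
      rw [closure_Ico hat.ne]
      exact hF.comp (f := fun v ↦ (v, y)) (by fun_prop)
        fun v hv ↦ ⟨⟨hv.1, hv.2.trans ht.2⟩, trivial⟩
    refine le_on_closure (fun v hv ↦ (hbefore v hv y).le) continuousOn_const hFy ?_
    rwa [closure_Ico hat.ne]
  exact hFt.not_gt (hstep t ⟨hat, ht.2⟩ huntil x)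

/-! ### Supersolutions with respect to a compact family of functionals -/

section Supersolution

variable {Ω E : Type*} [AddCommGroup E] [Module ℝ E] [TopologicalSpace E]
  {q : Ω → E →L[ℝ] ℝ} {L : E →L[ℝ] E} {c : ℝ → ℝ} {f g Y Z : ℝ → E} {a b : ℝ}

/-- Cross-positivity (quasimonotonicity) of `L` on the subspace `V`, with respect to the cone cut
out by the inequalities `0 ≤ q x v`: on the face of the cone where `q x` vanishes, `L` does not
point outwards. For symmetric matrices this is the resolvent positivity of `L`. -/
def CrossPositiveOn (q : Ω → E →L[ℝ] ℝ) (V : Submodule ℝ E) (L : E →L[ℝ] E) : Prop :=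
  ∀ v ∈ V, (∀ y, 0 ≤ q y v) → ∀ x, q x v = 0 → 0 ≤ q x (L v)

/-- `Y` is a supersolution of `Y' = L Y + c Y + f` on `[a, b]` in integrated form, for the order
defined by the functionals `q`. The integral is taken after applying `q x`, so that `E` needs
no norm. -/
def IsSupersolution (q : Ω → E →L[ℝ] ℝ) (L : E →L[ℝ] E) (c : ℝ → ℝ) (f : ℝ → E) (a b : ℝ)
    (Y : ℝ → E) : Prop :=
  ∀ x, ∀ s ∈ Icc a b, ∀ t ∈ Icc a b, s ≤ t →
    ∫ v in s..t, q x (L (Y v) + c v • Y v + f v) ≤ q x (Y t) - q x (Y s)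

theorem intervalIntegrable_of_mem_Icc {s t : ℝ} (hc : IntervalIntegrable c volume a b)
    (hs : s ∈ Icc a b) (ht : t ∈ Icc a b) : IntervalIntegrable c volume s t :=
  hc.mono_set (uIcc_subset_uIcc (Icc_subset_uIcc hs) (Icc_subset_uIcc ht))

theorem intervalIntegrable_clm_drift (φ : E →L[ℝ] ℝ) (L : E →L[ℝ] E) {s t : ℝ}
    (hc : IntervalIntegrable c volume a b) (hf : ContinuousOn f (Icc a b))
    (hY : ContinuousOn Y (Icc a b)) (hs : s ∈ Icc a b) (ht : t ∈ Icc a b) :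
    IntervalIntegrable (fun v ↦ φ (L (Y v) + c v • Y v + f v)) volume s t := by
  have hsub : uIcc s t ⊆ Icc a b := uIcc_subset_Icc hs ht
  simp only [map_add, map_smul, smul_eq_mul]
  have hLY := (φ.continuous.comp L.continuous).comp_continuousOn (hY.mono hsub)
  have hφY := φ.continuous.comp_continuousOn (hY.mono hsub)
  have hφf := φ.continuous.comp_continuousOn (hf.mono hsub)
  exact (hLY.intervalIntegrable.add
    ((intervalIntegrable_of_mem_Icc hc hs ht).mul_continuousOn hφY)).add hφf.intervalIntegrable

namespace IsSupersolution

protected theorem add (hY : IsSupersolution q L c f a b Y) (hZ : IsSupersolution q L c g a b Z)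
    (hc : IntervalIntegrable c volume a b) (hfc : ContinuousOn f (Icc a b))
    (hgc : ContinuousOn g (Icc a b)) (hYc : ContinuousOn Y (Icc a b))
    (hZc : ContinuousOn Z (Icc a b)) :
    IsSupersolution q L c (f + g) a b (Y + Z) := fun x s hs t ht hst ↦ calc
  _ = ∫ v in s..t, (q x (L (Y v) + c v • Y v + f v) + q x (L (Z v) + c v • Z v + g v)) := by
    congr 1 with v
    simp only [Pi.add_apply, map_add, smul_add]
    ring
  _ = (∫ v in s..t, q x (L (Y v) + c v • Y v + f v)) +
      ∫ v in s..t, q x (L (Z v) + c v • Z v + g v) :=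
    intervalIntegral.integral_add (intervalIntegrable_clm_drift (q x) L hc hfc hYc hs ht)
      (intervalIntegrable_clm_drift (q x) L hc hgc hZc hs ht)
  _ ≤ (q x (Y t) - q x (Y s)) + (q x (Z t) - q x (Z s)) :=
    add_le_add (hY x s hs t ht hst) (hZ x s hs t ht hst)
  _ = q x ((Y + Z) t) - q x ((Y + Z) s) := by
    simp only [Pi.add_apply, map_add]
    ring

theorem exp_smul (hc : IntervalIntegrable c volume a b) (M : ℝ) (e : E) :
    IsSupersolution q L c (fun t ↦ Real.exp (∫ r in a..t, (M + c r)) • (M • e - L e)) a b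
      (fun t ↦ Real.exp (∫ r in a..t, (M + c r)) • e) := fun x s hs t ht _ ↦ le_of_eq <| calc
  _ = ∫ v in s..t, (M + c v) * Real.exp (∫ r in a..v, (M + c r)) * q x e := by
    congr 1 with v
    simp only [map_add, map_sub, map_smul, smul_eq_mul]
    ring
  _ = _ := by
    rw [intervalIntegral.integral_mul_const, integral_mul_exp_integral
      (intervalIntegrable_const.add hc) (Icc_subset_uIcc hs) (Icc_subset_uIcc ht)]
    simp only [map_smul, smul_eq_mul]
    ring

end IsSupersolution

variable [TopologicalSpace Ω] [CompactSpace Ω] {V : Submodule ℝ E}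

theorem exists_forall_clm_lt_mul (hq : Continuous fun p : Ω × E ↦ q p.1 p.2)
    {e : E} (he : ∀ x, 0 < q x e) (v : E) : ∃ M : ℝ, ∀ x, q x v < M * q x e := by
  have heval : ∀ w : E, Continuous fun x ↦ q x w := fun w ↦
    hq.comp (continuous_id.prodMk continuous_const)
  obtain ⟨B, hB⟩ := (isCompact_range ((heval v).div (heval e) fun x ↦ (he x).ne')).bddAbove
  refine ⟨B + 1, fun x ↦ (div_lt_iff₀ (he x)).1 ?_⟩
  exact (hB (mem_range_self x)).trans_lt (lt_add_one B)

namespace IsSupersolution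

protected theorem pos (hY : IsSupersolution q L c f a b Y)
    (hq : Continuous fun p : Ω × E ↦ q p.1 p.2) (hL : CrossPositiveOn q V L)
    (hc : IntervalIntegrable c volume a b) (hfc : ContinuousOn f (Icc a b))
    (hf : ∀ t ∈ Icc a b, ∀ x, 0 < q x (f t)) (hYc : ContinuousOn Y (Icc a b))
    (hYV : ∀ t ∈ Icc a b, Y t ∈ V) (ha : ∀ x, 0 < q x (Y a)) :
    ∀ t ∈ Icc a b, ∀ x, 0 < q x (Y t) := by
  refine forall_pos_of_forall_nonneg_imp_pos ?_ ha fun t ht huntil x ↦ ?_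
  · exact hq.comp_continuousOn (continuousOn_snd.prodMk
      (hYc.comp continuousOn_fst fun p hp ↦ hp.1))
  have htI : t ∈ Icc a b := Ioc_subset_Icc_self ht
  have hsub : Icc a t ⊆ Icc a b := Icc_subset_Icc_right ht.2
  by_contra! hxt
  have htouch : q x (Y t) = 0 := hxt.antisymm (huntil t (right_mem_Icc.2 ht.1.le) x)
  have hinward : 0 ≤ q x (L (Y t)) :=
    hL (Y t) (hYV t htI) (huntil t (right_mem_Icc.2 ht.1.le)) x htouch
  refine hxt.not_gt (pos_of_integral_add_mul_le_sub (p := fun v ↦ q x (Y v))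
    (ℓ := fun v ↦ q x (L (Y v)) + q x (f v)) ht.1
    ((q x).continuous.comp_continuousOn (hYc.mono hsub)) (fun s hs ↦ huntil s hs x) ?_
    (add_pos_of_nonneg_of_pos hinward (hf t htI x))
    (intervalIntegrable_of_mem_Icc hc (left_mem_Icc.2 (ht.1.le.trans ht.2)) htI) fun s hs ↦ ?_)
  · exact ((q x).continuous.comp_continuousOn (L.continuous.comp_continuousOn (hYc.mono hsub))).add
      ((q x).continuous.comp_continuousOn (hfc.mono hsub))
  · convert hY x s (hsub hs) t htI hs.2 using 3 with v
    simp only [map_add, map_smul, smul_eq_mul]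
    ring

variable [ContinuousAdd E] [ContinuousSMul ℝ E]

theorem add_exp_smul_pos (hY : IsSupersolution q L c 0 a b Y)
    (hq : Continuous fun p : Ω × E ↦ q p.1 p.2) (hL : CrossPositiveOn q V L)
    (hc : IntervalIntegrable c volume a b) (hYc : ContinuousOn Y (Icc a b))
    (hYV : ∀ t ∈ Icc a b, Y t ∈ V) (ha : ∀ x, 0 ≤ q x (Y a))
    {e : E} (heV : e ∈ V) (he : ∀ x, 0 < q x e) {M : ℝ} (hM : ∀ x, q x (L e) < M * q x e) :
    ∀ t ∈ Icc a b, ∀ x, 0 < q x (Y t + Real.exp (∫ r in a..t, (M + c r)) • e) := by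
  have hexp : ContinuousOn (fun t ↦ Real.exp (∫ r in a..t, (M + c r))) (Icc a b) := by
    have hprim := intervalIntegral.continuousOn_primitive_interval'
      ((intervalIntegrable_const (c := M)).add hc) left_mem_uIcc
    exact (hprim.mono Icc_subset_uIcc).rexp
  have hfc := hexp.smul (continuousOn_const (c := M • e - L e))
  have hec := hexp.smul (continuousOn_const (c := e))
  refine (hY.add (exp_smul hc M e) hc continuousOn_const hfc hYc hec).pos hq hL hc
    (continuousOn_const.add hfc) (fun t _ x ↦ ?_) (hYc.add hec)
    (fun t ht ↦ V.add_mem (hYV t ht) (V.smul_mem _ heV)) fun x ↦ ?_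
  · simp only [Pi.add_apply, Pi.zero_apply, zero_add, map_smul, map_sub, smul_eq_mul]
    exact mul_pos (Real.exp_pos _) (sub_pos.2 (hM x))
  · simp only [Pi.add_apply, map_add, map_smul, smul_eq_mul]
    exact add_pos_of_nonneg_of_pos (ha x) (mul_pos (Real.exp_pos _) (he x))

protected theorem nonneg (hY : IsSupersolution q L c 0 a b Y)
    (hq : Continuous fun p : Ω × E ↦ q p.1 p.2) (hL : CrossPositiveOn q V L)
    (hc : IntervalIntegrable c volume a b) (hYc : ContinuousOn Y (Icc a b))
    (hYV : ∀ t ∈ Icc a b, Y t ∈ V) (ha : ∀ x, 0 ≤ q x (Y a))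
    {e : E} (heV : e ∈ V) (he : ∀ x, 0 < q x e) :
    ∀ t ∈ Icc a b, ∀ x, 0 ≤ q x (Y t) := by
  intro t ht x
  obtain ⟨M, hM⟩ := exists_forall_clm_lt_mul hq he (L e)
  have hperturb : ∀ ε > 0,
      0 < q x (Y t) + ε * (Real.exp (∫ r in a..t, (M + c r)) * q x e) := fun ε hε ↦ by
    have hpos := hY.add_exp_smul_pos hq hL hc hYc hYV ha (V.smul_mem ε heV) (M := M)
      (fun y ↦ by simpa using mul_pos hε (he y))
      (fun y ↦ by simpa [mul_left_comm] using mul_lt_mul_of_pos_left (hM y) hε) t ht x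
    simpa [mul_left_comm] using hpos
  have hk : 0 < Real.exp (∫ r in a..t, (M + c r)) * q x e := mul_pos (Real.exp_pos _) (he x)
  by_contra! hneg
  have hε := hperturb _ (div_pos (neg_pos.2 hneg) hk)
  rw [div_mul_cancel₀ _ hk.ne', add_neg_cancel] at hε
  exact hε.false

end IsSupersolution

end Supersolution

/-! ### Comparison in the Loewner order -/

section EntrywiseIntegral

variable {m n : Type*} {F : ℝ → Matrix m n ℝ} {a b s t : ℝ}

theorem linearMap_of_intervalIntegral [Finite m] [Finite n] (φ : Matrix m n ℝ →ₗ[ℝ] ℝ)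
    (hF : ∀ i j, IntervalIntegrable (fun v ↦ F v i j) volume s t) :
    φ (of fun i j ↦ ∫ v in s..t, F v i j) = ∫ v in s..t, φ (F v) := by
  classical
  cases nonempty_fintype m
  cases nonempty_fintype n
  have hφ : ∀ Z : Matrix m n ℝ, φ Z = ∑ p : m × n, Z p.1 p.2 * φ (single p.1 p.2 1) := fun Z ↦ by
    conv_lhs => rw [matrix_eq_sum_single Z]
    rw [map_sum, Fintype.sum_prod_type]
    refine Finset.sum_congr rfl fun i _ ↦ (map_sum _ _ _).trans (Finset.sum_congr rfl fun j _ ↦ ?_)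
    rw [← smul_eq_mul, ← map_smul, smul_single, smul_eq_mul, mul_one]
  simp only [hφ (F _)]
  rw [hφ, intervalIntegral.integral_finsetSum fun p _ ↦ (hF p.1 p.2).mul_const _]
  simp only [of_apply, intervalIntegral.integral_mul_const]

theorem sub_eq_of_intervalIntegral {Z : ℝ → Matrix m n ℝ}
    (hF : ∀ i j, IntervalIntegrable (fun v ↦ F v i j) volume a b)
    (hZ : ∀ t ∈ Icc a b, Z t = Z a + of fun i j ↦ ∫ v in a..t, F v i j)
    (hs : s ∈ Icc a b) (ht : t ∈ Icc a b) :
    Z t - Z s = of fun i j ↦ ∫ v in s..t, F v i j := by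
  have ha : a ∈ Icc a b := left_mem_Icc.2 (hs.1.trans hs.2)
  ext i j
  rw [hZ t ht, hZ s hs, add_sub_add_left_eq_sub, Matrix.sub_apply, of_apply, of_apply, of_apply,
    intervalIntegral.integral_interval_sub_left (intervalIntegrable_of_mem_Icc (hF i j) ha ht)
      (intervalIntegrable_of_mem_Icc (hF i j) ha hs)]

theorem intervalIntegrable_drift_apply [Finite m] [Finite n]
    (L : Matrix m n ℝ →ₗ[ℝ] Matrix m n ℝ) {c : ℝ → ℝ} {Z : ℝ → Matrix m n ℝ}
    (hc : IntervalIntegrable c volume a b) (hZ : ContinuousOn Z (Icc a b)) (hs : s ∈ Icc a b)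
    (ht : t ∈ Icc a b) (i : m) (j : n) :
    IntervalIntegrable (fun v ↦ (L (Z v) + c v • Z v) i j) volume s t := by
  simpa using intervalIntegrable_clm_drift (entryLinearMap ℝ ℝ i j).toContinuousLinearMap
    L.toContinuousLinearMap hc (continuousOn_const (c := 0)) hZ hs ht

theorem posSemidef_sub_intervalIntegral_of_eq {ι : Type*} [Finite ι]
    {L : Matrix ι ι ℝ →ₗ[ℝ] Matrix ι ι ℝ} {c : ℝ → ℝ} {Z : ℝ → Matrix ι ι ℝ}
    (hc : IntervalIntegrable c volume a b) (hZ : ContinuousOn Z (Icc a b))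
    (h : ∀ t ∈ Icc a b, Z t = Z a + of fun i j ↦ ∫ v in a..t, (L (Z v) + c v • Z v) i j)
    (hs : s ∈ Icc a b) (ht : t ∈ Icc a b) :
    (Z t - Z s - of fun i j ↦ ∫ v in s..t, (L (Z v) + c v • Z v) i j).PosSemidef := by
  have hab : a ≤ b := hs.1.trans hs.2
  rw [sub_eq_of_intervalIntegral (intervalIntegrable_drift_apply L hc hZ (left_mem_Icc.2 hab)
    (right_mem_Icc.2 hab)) h hs ht, sub_self]
  exact .zero

end EntrywiseIntegral

section Loewner

variable {ι : Type*} [Fintype ι] {a b : ℝ}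

/-- The functional `Z ↦ xᵀ Z x` testing a matrix against the vector `x`; for `x` on the unit sphere
(of the sup norm on `ι → ℝ`) these functionals cut out the cone of positive semidefinite matrices
among the symmetric ones. -/
def quadFormAt (x : ι → ℝ) : Matrix ι ι ℝ →L[ℝ] ℝ where
  toFun Z := x ⬝ᵥ Z *ᵥ x
  map_add' Z W := by rw [add_mulVec, dotProduct_add]
  map_smul' r Z := by rw [smul_mulVec, dotProduct_smul, RingHom.id_apply]
  cont := by fun_prop

theorem quadFormAt_apply (x : ι → ℝ) (Z : Matrix ι ι ℝ) : quadFormAt x Z = x ⬝ᵥ Z *ᵥ x := rfl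

theorem continuous_quadFormAt :
    Continuous fun p : (ι → ℝ) × Matrix ι ι ℝ ↦ quadFormAt p.1 p.2 := by
  simp only [quadFormAt_apply]
  fun_prop

theorem quadFormAt_smul_left (r : ℝ) (x : ι → ℝ) (Z : Matrix ι ι ℝ) :
    quadFormAt (r • x) Z = r ^ 2 * quadFormAt x Z := by
  simp only [quadFormAt_apply, mulVec_smul, dotProduct_smul, smul_dotProduct, smul_eq_mul]
  ring

theorem posSemidef_of_forall_sphere {Z : Matrix ι ι ℝ} (hZ : Z.IsHermitian)
    (h : ∀ x ∈ Metric.sphere (0 : ι → ℝ) 1, 0 ≤ quadFormAt x Z) : Z.PosSemidef := by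
  refine .of_dotProduct_mulVec_nonneg hZ fun x ↦ ?_
  rw [star_trivial, ← quadFormAt_apply]
  rcases eq_or_ne x 0 with rfl | hx
  · simp [quadFormAt_apply]
  have hunit := h (‖x‖⁻¹ • x) (mem_sphere_zero_iff_norm.2 (norm_smul_inv_norm (𝕜 := ℝ) hx))
  rw [quadFormAt_smul_left] at hunit
  exact nonneg_of_mul_nonneg_right hunit (by positivity)

variable {L : Matrix ι ι ℝ →ₗ[ℝ] Matrix ι ι ℝ} {c : ℝ → ℝ} {Z : ℝ → Matrix ι ι ℝ}

theorem isSupersolution_of_posSemidef (hc : IntervalIntegrable c volume a b)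
    (hZ : ContinuousOn Z (Icc a b))
    (h : ∀ s ∈ Icc a b, ∀ t ∈ Icc a b, s ≤ t →
      (Z t - Z s - of fun i j ↦ ∫ v in s..t, (L (Z v) + c v • Z v) i j).PosSemidef) :
    IsSupersolution (fun x : Metric.sphere (0 : ι → ℝ) 1 ↦ quadFormAt x.1)
      L.toContinuousLinearMap c 0 a b Z := by
  intro x s hs t ht hst
  have hnonneg : 0 ≤ quadFormAt x.1 (Z t - Z s - _) := (h s hs t ht hst).dotProduct_mulVec_nonneg x
  have hint := linearMap_of_intervalIntegral (quadFormAt x.1 : Matrix ι ι ℝ →ₗ[ℝ] ℝ)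
    (intervalIntegrable_drift_apply L hc hZ hs ht)
  simp only [ContinuousLinearMap.coe_coe] at hint
  rw [map_sub, map_sub, hint] at hnonneg
  simpa only [Pi.zero_apply, add_zero, LinearMap.coe_toContinuousLinearMap']
    using sub_nonneg.1 hnonneg

theorem isSupersolution_neg_of_posSemidef (hc : IntervalIntegrable c volume a b)
    (hZ : ContinuousOn Z (Icc a b))
    (h : ∀ s ∈ Icc a b, ∀ t ∈ Icc a b, s ≤ t →
      ((of fun i j ↦ ∫ v in s..t, (L (Z v) + c v • Z v) i j) - (Z t - Z s)).PosSemidef) :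
    IsSupersolution (fun x : Metric.sphere (0 : ι → ℝ) 1 ↦ quadFormAt x.1)
      L.toContinuousLinearMap c 0 a b (-Z) := by
  refine isSupersolution_of_posSemidef hc hZ.neg fun s hs t ht hst ↦ ?_
  convert h s hs t ht hst using 1
  ext i j
  simp only [Pi.neg_apply, map_neg, smul_neg, ← neg_add, Matrix.sub_apply, Matrix.neg_apply,
    of_apply, intervalIntegral.integral_neg]
  ring

theorem crossPositiveOn_quadFormAt
    (hL : ∀ P : Matrix ι ι ℝ, P.PosSemidef → ∀ x, x ⬝ᵥ P *ᵥ x = 0 → 0 ≤ x ⬝ᵥ L P *ᵥ x) :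
    CrossPositiveOn (fun x : Metric.sphere (0 : ι → ℝ) 1 ↦ quadFormAt x.1)
      (selfAdjoint.submodule ℝ (Matrix ι ι ℝ)) L.toContinuousLinearMap := fun P hP hnonneg x hx ↦
  hL P (posSemidef_of_forall_sphere hP fun y hy ↦ hnonneg ⟨y, hy⟩) x.1 hx

end Loewner

theorem dotProduct_sum_smul_conj_mulVec_nonneg {ι κ m : Type*} [Fintype ι] [Fintype κ] [Fintype m]
    {K : Matrix κ κ ℝ} (hK : K.PosSemidef) {P : Matrix ι ι ℝ} (hP : P.PosSemidef)
    (N : κ → Matrix m ι ℝ) (x : m → ℝ) :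
    0 ≤ x ⬝ᵥ (∑ i, ∑ j, K i j • (N i * P * (N j)ᵀ)) *ᵥ x := by
  set W : Matrix κ ι ℝ := of fun i ↦ x ᵥ* N i
  have hW : ∀ i j, x ⬝ᵥ (N i * P * (N j)ᵀ) *ᵥ x = (W * P * Wᴴ) i j := fun i j ↦ by
    rw [← mulVec_mulVec, mulVec_transpose, dotProduct_mulVec, ← vecMul_vecMul]
    rfl
  have hschur := (hK.hadamard (hP.mul_mul_conjTranspose_same W)).dotProduct_mulVec_nonneg 1
  simpa only [star_one, one_dotProduct, mulVec, dotProduct_one, hadamard_apply, sum_mulVec,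
    dotProduct_sum, smul_mulVec, dotProduct_smul, smul_eq_mul, hW] using hschur

section Lyapunov

variable {n d : ℕ} (A : Matrix (Fin n) (Fin n) ℝ) (N : Fin d → Matrix (Fin n) (Fin n) ℝ)
  (K : Matrix (Fin d) (Fin d) ℝ)

/-- The Lyapunov operator `lyap A N K` as a linear map, so that it can serve as the operator of the
comparison theorem. -/
def lyapLinearMap : Matrix (Fin n) (Fin n) ℝ →ₗ[ℝ] Matrix (Fin n) (Fin n) ℝ where
  toFun := lyap A N K
  map_add' X Y := by
    simp only [lyap, Matrix.mul_add, Matrix.add_mul, smul_add, Finset.sum_add_distrib]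
    abel
  map_smul' r X := by
    simp only [lyap, Matrix.mul_smul, Matrix.smul_mul, smul_add, Finset.smul_sum, smul_comm r,
      RingHom.id_apply]

variable {K}

theorem dotProduct_lyap_mulVec_nonneg (hK : K.PosSemidef) {P : Matrix (Fin n) (Fin n) ℝ}
    (hP : P.PosSemidef) {x : Fin n → ℝ} (hx : x ⬝ᵥ P *ᵥ x = 0) :
    0 ≤ x ⬝ᵥ lyap A N K P *ᵥ x := by
  have hPx : P *ᵥ x = 0 := (hP.dotProduct_mulVec_zero_iff x).1 hx
  have hxP : x ᵥ* P = 0 := by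
    rw [← mulVec_transpose, isHermitian_iff_isSymm.1 hP.isHermitian, hPx]
  have hA : x ⬝ᵥ (A * P) *ᵥ x = 0 := by
    rw [← mulVec_mulVec, hPx, mulVec_zero, dotProduct_zero]
  have hAT : x ⬝ᵥ (P * Aᵀ) *ᵥ x = 0 := by
    rw [dotProduct_mulVec, ← vecMul_vecMul, hxP, zero_vecMul, zero_dotProduct]
  rw [lyap, add_mulVec, add_mulVec, dotProduct_add, dotProduct_add, hA, hAT, zero_add, zero_add]
  exact dotProduct_sum_smul_conj_mulVec_nonneg hK hP N x

end Lyapunov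

theorem stmt_18_general {ι : Type*} [Fintype ι] {a b : ℝ}
    (L : Matrix ι ι ℝ →ₗ[ℝ] Matrix ι ι ℝ)
    (hL : ∀ P : Matrix ι ι ℝ, P.PosSemidef → ∀ x, x ⬝ᵥ P *ᵥ x = 0 → 0 ≤ x ⬝ᵥ L P *ᵥ x)
    {c : ℝ → ℝ} (hc : IntervalIntegrable c volume a b) {X Xbar : ℝ → Matrix ι ι ℝ}
    (hXsymm : ∀ t ∈ Icc a b, (X t).IsSymm) (hXbarsymm : ∀ t ∈ Icc a b, (Xbar t).IsSymm)
    (hXcont : ContinuousOn X (Icc a b)) (hXbarcont : ContinuousOn Xbar (Icc a b))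
    (hinit : (Xbar a - X a).PosSemidef)
    (hXbar : ∀ s ∈ Icc a b, ∀ t ∈ Icc a b, s ≤ t →
      (Xbar t - Xbar s - of fun i j ↦ ∫ v in s..t, (L (Xbar v) + c v • Xbar v) i j).PosSemidef)
    (hX : ∀ s ∈ Icc a b, ∀ t ∈ Icc a b, s ≤ t →
      ((of fun i j ↦ ∫ v in s..t, (L (X v) + c v • X v) i j) - (X t - X s)).PosSemidef) :
    ∀ t ∈ Icc a b, (Xbar t - X t).PosSemidef := by
  classical
  have hsuper : IsSupersolution (fun x : Metric.sphere (0 : ι → ℝ) 1 ↦ quadFormAt x.1)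
      L.toContinuousLinearMap c 0 a b (Xbar - X) := by
    simpa only [add_zero, ← sub_eq_add_neg] using
      (isSupersolution_of_posSemidef hc hXbarcont hXbar).add
        (isSupersolution_neg_of_posSemidef hc hXcont hX) hc continuousOn_const continuousOn_const
        hXbarcont hXcont.neg
  have hsymm : ∀ t ∈ Icc a b, (Xbar t - X t).IsHermitian := fun t ht ↦
    isHermitian_iff_isSymm.2 ((hXbarsymm t ht).sub (hXsymm t ht))
  have hone : ∀ x : Metric.sphere (0 : ι → ℝ) 1, 0 < quadFormAt x.1 1 := fun x ↦
    PosDef.one.dotProduct_mulVec_pos (ne_zero_of_mem_unit_sphere x)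
  refine fun t ht ↦ posSemidef_of_forall_sphere (hsymm t ht) fun x hx ↦ ?_
  have hq : Continuous fun p : Metric.sphere (0 : ι → ℝ) 1 × Matrix ι ι ℝ ↦
      quadFormAt p.1.1 p.2 :=
    continuous_quadFormAt.comp (continuous_subtype_val.prodMap continuous_id)
  exact hsuper.nonneg hq (crossPositiveOn_quadFormAt hL) hc (hXbarcont.sub hXcont) hsymm
    (fun y ↦ hinit.dotProduct_mulVec_nonneg y.1) isHermitian_one hone t ht ⟨x, hx⟩

end

theorem stmt_18 (n d : ℕ) (T : ℝ) (hT : 0 ≤ T)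
    (A : Matrix (Fin n) (Fin n) ℝ) (N : Fin d → Matrix (Fin n) (Fin n) ℝ)
    (K : Matrix (Fin d) (Fin d) ℝ) (hK : K.PosSemidef)
    (c : ℝ → ℝ) (hcnonneg : ∀ t ∈ Set.Icc (0:ℝ) T, 0 ≤ c t)
    (hcleft : ∀ t ∈ Set.Ioc (0:ℝ) T, ContinuousWithinAt c (Set.Iic t) t)
    (hcint : IntervalIntegrable c MeasureTheory.volume 0 T)
    (X Xbar : ℝ → Matrix (Fin n) (Fin n) ℝ)
    (hXsymm : ∀ t ∈ Set.Icc (0:ℝ) T, (X t).IsSymm)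
    (hXbarsymm : ∀ t ∈ Set.Icc (0:ℝ) T, (Xbar t).IsSymm)
    (hXcont : ∀ i j, ContinuousOn (fun t => X t i j) (Set.Icc 0 T))
    (hXbarcont : ∀ i j, ContinuousOn (fun t => Xbar t i j) (Set.Icc 0 T))
    (hinit : X 0 = Xbar 0)
    -- X̄ solves the matrix integral equation
    (hXbar : ∀ t ∈ Set.Icc (0:ℝ) T,
      Xbar t = Xbar 0 + Matrix.of (fun i j =>
        ∫ v in (0:ℝ)..t, (lyap A N K (Xbar v) + c v • Xbar v) i j))
    -- X satisfies the matrix integral inequality (Loewner order)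
    (hX : ∀ s ∈ Set.Icc (0:ℝ) T, ∀ t ∈ Set.Icc (0:ℝ) T, s ≤ t →
      (Matrix.of (fun i j => ∫ v in s..t, (lyap A N K (X v) + c v • X v) i j)
        - (X t - X s)).PosSemidef) :
    ∀ t ∈ Set.Icc (0:ℝ) T, (Xbar t - X t).PosSemidef := by
  have hXbarc : ContinuousOn Xbar (Set.Icc 0 T) :=
    continuousOn_pi.2 fun i ↦ continuousOn_pi.2 (hXbarcont i)
  exact stmt_18_general (lyapLinearMap A N K)
    (fun P hP x hx ↦ dotProduct_lyap_mulVec_nonneg A N hK hP hx) hcint hXsymm hXbarsymm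
    (continuousOn_pi.2 fun i ↦ continuousOn_pi.2 (hXcont i)) hXbarc
    (by rw [hinit, sub_self]; exact .zero)
    (fun s hs t ht _ ↦ posSemidef_sub_intervalIntegral_of_eq hcint hXbarc hXbar hs ht) hX
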